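/- arXiv:2101.12698 — 4 statements merged into one kernel-verified Lean document; each statement's English description precedes it below -/
import Mathlib

section
/- Let (X, μ) and (Y, ν) be measure spaces with μ, ν finite measures, let ψ : X ≃ Y be a measurable equivalence, assume ψ*ν := Measure.map ψ.symm ν ≪ μ, and let Φ : X → ℝ≥0 be the pointwise square root of d(ψ*ν)/dμ. Then the lightcone comparison functional satisfies the lower bound E[ψ] := ∫_X (Φ − 1)² dμ ≥ (√(ν(Y)) − √(μ(X)))². (Lower bound of Lemma 3.6, eq. (37), of the paper.) -/
open MeasureTheory
open scoped NNReal ENNReal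

/-- Lower bound of Lemma 3.6, eq. (37), of the paper:
E[ψ] ≥ (√A(Σ_L) − √A(Σ̂_L))². -/
theorem lightcone_comparison_functional_lower_bound
    {X Y : Type*} [MeasurableSpace X] [MeasurableSpace Y]
    (μ : Measure X) (ν : Measure Y) [IsFiniteMeasure μ] [IsFiniteMeasure ν]
    (ψ : X ≃ᵐ Y) (hac : ν.map ψ.symm ≪ μ)
    (Φ : X → ℝ≥0)
    (hΦ : ∀ x, ((Φ x : ℝ≥0∞)) ^ 2 = (ν.map ψ.symm).rnDeriv μ x) :
    (Real.sqrt (ν Set.univ).toReal - Real.sqrt (μ Set.univ).toReal) ^ 2 ≤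
      ∫ x, ((Φ x : ℝ) - 1) ^ 2 ∂μ := by
  set κ := ν.map ψ.symm with hκ
  have hfin : IsFiniteMeasure κ := by rw [hκ]; infer_instance
  have hsq : ∀ x, (Φ x : ℝ) ^ 2 = (κ.rnDeriv μ x).toReal := by
    intro x
    rw [← hΦ x]
    simp
  have hΦeq : (fun x => (Φ x : ℝ)) = fun x => Real.sqrt ((κ.rnDeriv μ x).toReal) := by
    funext x
    rw [← hsq x, Real.sqrt_sq (Φ x).coe_nonneg]
  have hmeas : Measurable (fun x => (Φ x : ℝ)) := by
    rw [hΦeq]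
    exact (Measure.measurable_rnDeriv κ μ).ennreal_toReal.sqrt
  have hi2 : Integrable (fun x => (Φ x : ℝ) ^ 2) μ := by
    simp_rw [hsq]
    exact Measure.integrable_toReal_rnDeriv
  have hi1 : Integrable (fun x => (Φ x : ℝ)) μ := by
    refine (hi2.add (integrable_const (1 : ℝ))).mono' hmeas.aestronglyMeasurable ?_
    refine Filter.Eventually.of_forall fun x => ?_
    simp only [Pi.add_apply]
    rw [Real.norm_of_nonneg (Φ x).coe_nonneg]
    nlinarith [sq_nonneg ((Φ x : ℝ) - 1), (Φ x).coe_nonneg]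
  have ha : ∫ x, (Φ x : ℝ) ^ 2 ∂μ = (ν Set.univ).toReal := by
    simp_rw [hsq]
    rw [Measure.integral_toReal_rnDeriv hac, Measure.real, hκ,
      Measure.map_apply ψ.symm.measurable MeasurableSet.univ, Set.preimage_univ]
  have hE : ∀ t : ℝ, ∫ x, ((Φ x : ℝ) - t) ^ 2 ∂μ =
      (ν Set.univ).toReal - 2 * t * (∫ x, (Φ x : ℝ) ∂μ) + t ^ 2 * (μ Set.univ).toReal := by
    intro t
    have h : (fun x => ((Φ x : ℝ) - t) ^ 2) =
        fun x => ((Φ x : ℝ) ^ 2 - 2 * t * (Φ x : ℝ)) + t ^ 2 := by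
      funext x; ring
    have hs : Integrable (fun x => (Φ x : ℝ) ^ 2 - 2 * t * (Φ x : ℝ)) μ :=
      hi2.sub (hi1.const_mul _)
    rw [h, integral_add hs (integrable_const _),
      integral_sub hi2 (hi1.const_mul _), integral_const_mul, ha, integral_const,
      smul_eq_mul, Measure.real]
    ring
  have hpos : ∀ t : ℝ, 0 ≤ (ν Set.univ).toReal - 2 * t * (∫ x, (Φ x : ℝ) ∂μ)
      + t ^ 2 * (μ Set.univ).toReal := fun t => by
    rw [← hE t]
    exact integral_nonneg fun x => sq_nonneg _
  have h1 := hE 1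
  rw [h1]
  have ha0 : 0 ≤ (ν Set.univ).toReal := ENNReal.toReal_nonneg
  have hm0 : 0 ≤ (μ Set.univ).toReal := ENNReal.toReal_nonneg
  generalize (ν Set.univ).toReal = a at *
  generalize (μ Set.univ).toReal = m at *
  generalize (∫ x, (Φ x : ℝ) ∂μ) = b at *
  have hd : discrim m (-2 * b) a ≤ 0 :=
    discrim_le_zero fun t => by nlinarith [hpos t]
  have hb : b ≤ Real.sqrt a * Real.sqrt m := by
    rw [← Real.sqrt_mul ha0]
    apply Real.le_sqrt_of_sq_le
    unfold discrim at hd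
    nlinarith
  nlinarith [Real.sq_sqrt ha0, Real.sq_sqrt hm0]
end

section
/- Let (X, μ) and (Y, ν) be measure spaces with μ, ν finite measures, let ψ : X ≃ Y be a measurable equivalence, and assume the mutual absolute continuity Measure.map ψ.symm ν ≪ μ and μ ≪ Measure.map ψ.symm ν. Let Φ : X → ℝ≥0 be the pointwise square root of d(Measure.map ψ.symm ν)/dμ and let Φ' : Y → ℝ≥0 be the pointwise square root of d(Measure.map ψ μ)/dν. Then the lightcone comparison functional is symmetric: ∫_Y (Φ' − 1)² dν = ∫_X (Φ − 1)² dμ, i.e. E[ψ⁻¹] = E[ψ]. (Symmetry property of Lemma 3.6, eq. (32), of the paper.) -/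
open MeasureTheory
open scoped NNReal ENNReal

/-- Symmetry of the lightcone comparison functional (Lemma 3.6, eq. (32), of the
paper): E[ψ⁻¹] = E[ψ]. -/
theorem lightcone_comparison_functional_symm
    {X Y : Type*} [MeasurableSpace X] [MeasurableSpace Y]
    (μ : Measure X) (ν : Measure Y) [IsFiniteMeasure μ] [IsFiniteMeasure ν]
    (ψ : X ≃ᵐ Y)
    (hac : ν.map ψ.symm ≪ μ) (hac' : μ ≪ ν.map ψ.symm)
    (Φ : X → ℝ≥0) (Φ' : Y → ℝ≥0)
    (hΦ : ∀ x, ((Φ x : ℝ≥0∞)) ^ 2 = (ν.map ψ.symm).rnDeriv μ x)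
    (hΦ' : ∀ y, ((Φ' y : ℝ≥0∞)) ^ 2 = (μ.map ψ).rnDeriv ν y) :
    ∫ y, ((Φ' y : ℝ) - 1) ^ 2 ∂ν = ∫ x, ((Φ x : ℝ) - 1) ^ 2 ∂μ := by
  have hmap : (ν.map ψ.symm).map ψ = ν := by simp
  have hfin : IsFiniteMeasure (ν.map ψ.symm) := Measure.isFiniteMeasure_map _ _
  have h1 := hac'.ae_le (ψ.measurableEmbedding.rnDeriv_map μ (ν.map ψ.symm))
  rw [hmap] at h1
  have h2 := Measure.inv_rnDeriv' hac'
  have h3 : ∫ y, ((Φ' y : ℝ) - 1) ^ 2 ∂ν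
      = ∫ x, ((Φ' (ψ x) : ℝ) - 1) ^ 2 ∂(ν.map ψ.symm) := by
    conv_lhs => rw [← hmap]
    rw [ψ.measurableEmbedding.integral_map]
  rw [h3, ← integral_toReal_rnDeriv_mul hac]
  apply integral_congr_ae
  filter_upwards [h1, h2] with x hx1 hx2
  rw [← hΦ'] at hx1
  rw [← hx1, Pi.inv_apply, ← hΦ] at hx2
  rw [← hΦ]
  have hne : Φ x ≠ 0 := by
    intro h0
    rw [h0] at hx2
    have : ((Φ' (ψ x) : ℝ≥0∞)) ^ 2 ≠ ∞ := by finiteness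
    apply this
    rw [← hx2]
    simp
  have hprod : (Φ x : ℝ) ^ 2 * (Φ' (ψ x) : ℝ) ^ 2 = 1 := by
    have hr := congrArg ENNReal.toReal hx2
    simp only [ENNReal.toReal_inv, ENNReal.toReal_pow, ENNReal.coe_toReal] at hr
    rw [← hr]
    have : (Φ x : ℝ) ≠ 0 := by exact_mod_cast hne
    field_simp
  have hone : (Φ x : ℝ) * (Φ' (ψ x) : ℝ) = 1 := by
    have h0 : 0 ≤ (Φ x : ℝ) * (Φ' (ψ x) : ℝ) := by positivity
    nlinarith
  simp only [ENNReal.toReal_pow, ENNReal.coe_toReal]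
  calc (Φ x : ℝ) ^ 2 * ((Φ' (ψ x) : ℝ) - 1) ^ 2
      = ((Φ x : ℝ) * (Φ' (ψ x) : ℝ) - Φ x) ^ 2 := by ring
    _ = ((Φ x : ℝ) - 1) ^ 2 := by rw [hone]; ring
end

section
/- Let (X, μ), (Y, ν), (Z, ρ) be measure spaces with μ, ν, ρ finite measures, let ψ : X ≃ Y and σ : Y ≃ Z be measurable equivalences, and assume Measure.map ψ.symm ν ≪ μ and Measure.map σ.symm ρ ≪ ν. Let Φ_{XY}, Φ_{YZ}, Φ_{XZ} be the conformal factors (pointwise square roots of the Radon–Nikodym derivatives) of ψ, σ, and σ ∘ ψ respectively. Then the square roots of the lightcone comparison functionals satisfy the triangle inequality √(∫_X (Φ_{XZ} − 1)² dμ) ≤ √(∫_X (Φ_{XY} − 1)² dμ) + √(∫_Y (Φ_{YZ} − 1)² dν). (Triangle inequality underlying property (iv) of the distance in Theorem 4.3 of the paper, obtained from the chain rule Φ_{XZ} = (Φ_{YZ}∘ψ)·Φ_{XY}, the change-of-variables formula, and the Minkowski inequality in L²(μ).) -/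
open MeasureTheory
open scoped NNReal ENNReal

lemma aux_norm {X : Type*} [MeasurableSpace X] {μ : Measure X} {f : X → ℝ} (hf : MemLp f 2 μ) :
    (eLpNorm f 2 μ).toReal = Real.sqrt (∫ x, (f x) ^ 2 ∂μ) := by
  rw [hf.eLpNorm_eq_integral_rpow_norm (by norm_num) (by norm_num), ENNReal.toReal_ofReal
    (by positivity), Real.sqrt_eq_rpow]
  simp

lemma aux_mink {X : Type*} [MeasurableSpace X] {μ : Measure X} {f g : X → ℝ}
    (hf : MemLp f 2 μ) (hg : MemLp g 2 μ) :
    Real.sqrt (∫ x, (f x + g x) ^ 2 ∂μ) ≤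
      Real.sqrt (∫ x, (f x) ^ 2 ∂μ) + Real.sqrt (∫ x, (g x) ^ 2 ∂μ) := by
  have h := aux_norm (hf.add hg)
  simp only [Pi.add_apply] at h
  rw [← h, ← aux_norm hf, ← aux_norm hg, ← ENNReal.toReal_add hf.2.ne hg.2.ne]
  exact ENNReal.toReal_mono (ENNReal.add_ne_top.2 ⟨hf.2.ne, hg.2.ne⟩)
    (eLpNorm_add_le hf.1 hg.1 (by norm_num))

lemma aux_meas {X : Type*} [MeasurableSpace X] {Φ : X → ℝ≥0} {g : X → ℝ≥0∞} (hg : Measurable g)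
    (h : ∀ x, ((Φ x : ℝ≥0∞)) ^ 2 = g x) : Measurable Φ := by
  have : Φ = fun x => NNReal.sqrt (g x).toNNReal := by
    funext x
    rw [← h x, ← ENNReal.coe_pow, ENNReal.toNNReal_coe, NNReal.sqrt_sq]
  rw [this]
  exact NNReal.continuous_sqrt.measurable.comp hg.ennreal_toNNReal

lemma aux_memLp {X : Type*} [MeasurableSpace X] {μ κ : Measure X} [IsFiniteMeasure μ]
    [IsFiniteMeasure κ] {Φ : X → ℝ≥0}
    (h : ∀ x, ((Φ x : ℝ≥0∞)) ^ 2 = κ.rnDeriv μ x) : MemLp (fun x => (Φ x : ℝ)) 2 μ := by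
  have hm := aux_meas (Measure.measurable_rnDeriv _ _) h
  rw [memLp_two_iff_integrable_sq hm.coe_nnreal_real.aestronglyMeasurable]
  refine (Measure.integrable_toReal_rnDeriv (μ := κ) (ν := μ)).congr (ae_of_all _ fun x => ?_)
  simp [← h x]

/-- Triangle inequality for the square roots of the lightcone comparison
functionals (underlying property (iv) of the distance in Theorem 4.3 of the
paper). -/
theorem lightcone_comparison_functional_triangle
    {X Y Z : Type*} [MeasurableSpace X] [MeasurableSpace Y] [MeasurableSpace Z]
    (μ : Measure X) (ν : Measure Y) (ρ : Measure Z)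
    [IsFiniteMeasure μ] [IsFiniteMeasure ν] [IsFiniteMeasure ρ]
    (ψ : X ≃ᵐ Y) (σ : Y ≃ᵐ Z)
    (hacψ : ν.map ψ.symm ≪ μ) (hacσ : ρ.map σ.symm ≪ ν)
    (ΦXY : X → ℝ≥0) (ΦYZ : Y → ℝ≥0) (ΦXZ : X → ℝ≥0)
    (hΦXY : ∀ x, ((ΦXY x : ℝ≥0∞)) ^ 2 = (ν.map ψ.symm).rnDeriv μ x)
    (hΦYZ : ∀ y, ((ΦYZ y : ℝ≥0∞)) ^ 2 = (ρ.map σ.symm).rnDeriv ν y)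
    (hΦXZ : ∀ x, ((ΦXZ x : ℝ≥0∞)) ^ 2 = (ρ.map (ψ.trans σ).symm).rnDeriv μ x) :
    Real.sqrt (∫ x, ((ΦXZ x : ℝ) - 1) ^ 2 ∂μ) ≤
      Real.sqrt (∫ x, ((ΦXY x : ℝ) - 1) ^ 2 ∂μ) +
        Real.sqrt (∫ y, ((ΦYZ y : ℝ) - 1) ^ 2 ∂ν) := by
  have mXY := aux_meas (Measure.measurable_rnDeriv _ _) hΦXY
  have mYZ := aux_meas (Measure.measurable_rnDeriv _ _) hΦYZ
  have hν : μ.withDensity (fun x => (ΦXY x : ℝ≥0∞) ^ 2) = ν.map ψ.symm := by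
    simp_rw [hΦXY]; exact Measure.withDensity_rnDeriv_eq _ _ hacψ
  have hρ : ν.withDensity (fun x => (ΦYZ x : ℝ≥0∞) ^ 2) = ρ.map σ.symm := by
    simp_rw [hΦYZ]; exact Measure.withDensity_rnDeriv_eq _ _ hacσ
  have hm1 : Measurable (fun x => (ΦXY x : ℝ≥0∞) ^ 2) := by fun_prop
  have hm2 : Measurable (fun x => (ΦYZ (ψ x) : ℝ≥0∞) ^ 2) := by
    have := ψ.measurable
    fun_prop
  have hκ : ρ.map (ψ.trans σ).symm =
      μ.withDensity ((fun x => (ΦXY x : ℝ≥0∞) ^ 2) * fun x => (ΦYZ (ψ x) : ℝ≥0∞) ^ 2) := by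
    rw [withDensity_mul _ hm1 hm2, hν]
    have : ρ.map (ψ.trans σ).symm = (ρ.map σ.symm).map ψ.symm := by
      rw [Measure.map_map ψ.symm.measurable σ.symm.measurable]; rfl
    rw [this, ← hρ]
    ext s hs
    rw [Measure.map_apply ψ.symm.measurable hs, withDensity_apply _ (ψ.symm.measurable hs),
      withDensity_apply _ hs, setLIntegral_map hs hm2 ψ.symm.measurable]
    simp
  have hchain : ∀ᵐ x ∂μ, (ΦXZ x : ℝ) = ΦYZ (ψ x) * ΦXY x := by
    have h1 := Measure.rnDeriv_withDensity μ (hm1.mul hm2)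
    rw [← hκ] at h1
    filter_upwards [h1] with x hx
    rw [← hΦXZ x] at hx
    simp only [Pi.mul_apply] at hx
    norm_cast at hx
    have : ΦXZ x = ΦYZ (ψ x) * ΦXY x := by
      rw [← mul_pow] at hx
      rw [mul_comm]
      exact (pow_left_inj₀ (by positivity) (by positivity) two_ne_zero).1 hx
    rw [this]; push_cast; ring
  have LXY := aux_memLp hΦXY
  have LXZ := aux_memLp hΦXZ
  have L1 : MemLp (fun x => (ΦXY x : ℝ) - 1) 2 μ := LXY.sub (memLp_const 1)
  have L2 : MemLp (fun x => ((ΦYZ (ψ x) : ℝ) - 1) * ΦXY x) 2 μ := by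
    refine (memLp_congr_ae ?_).1 (LXZ.sub LXY)
    filter_upwards [hchain] with x hx
    simp only [Pi.sub_apply, hx]; ring
  have hI : ∫ x, (((ΦYZ (ψ x) : ℝ) - 1) * ΦXY x) ^ 2 ∂μ = ∫ y, ((ΦYZ y : ℝ) - 1) ^ 2 ∂ν := by
    have h2 : ∫ x, ((ΦYZ (ψ x) : ℝ) - 1) ^ 2 ∂(ν.map ψ.symm) = ∫ y, ((ΦYZ y : ℝ) - 1) ^ 2 ∂ν := by
      rw [integral_map_equiv]; simp
    rw [← h2, ← hν]
    have h3 := integral_withDensity_eq_integral_smul (μ := μ) (f := fun x => ΦXY x ^ 2)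
      (by fun_prop) (fun x => ((ΦYZ (ψ x) : ℝ) - 1) ^ 2)
    simp only [ENNReal.coe_pow] at h3
    rw [h3]
    congr 1; funext x
    simp [NNReal.smul_def]; ring
  have hE : ∫ x, ((ΦXZ x : ℝ) - 1) ^ 2 ∂μ =
      ∫ x, (((ΦXY x : ℝ) - 1) + ((ΦYZ (ψ x) : ℝ) - 1) * ΦXY x) ^ 2 ∂μ := by
    refine integral_congr_ae ?_
    filter_upwards [hchain] with x hx
    rw [hx]; ring
  rw [hE, ← hI]
  exact aux_mink L1 L2
end

section
/- Let (X, μ) be a finite measure space, let ρ be a finite measure on X with ρ ≪ μ, let Φ : X → ℝ≥0 be the pointwise square root of dρ/dμ, and let f : X → ℝ be measurable. Set μ' := μ.withDensity (fun x => ENNReal.ofReal (Real.exp (2 * f x))). Then ρ ≪ μ', the Radon–Nikodym derivative satisfies √(dρ/dμ') = Real.exp(−f) · Φ μ-almost everywhere, and consequently ∫_X (√(dρ/dμ') − 1)² dμ' = ∫_X (Real.exp(−f(x)) · Φ(x) − 1)² · Real.exp(2 f x) dμ(x). (Paper eq. (40): the transformation law of the lightcone comparison functional under a conformal rescaling ĥ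 → e^{2f} ĥ of the reference metric, showing E is not conformally invariant.) -/
open MeasureTheory
open scoped NNReal ENNReal

/-- Paper eq. (40): the transformation law of the lightcone comparison functional
under a conformal rescaling ĥ → e^{2f} ĥ of the reference metric (the area
measure is multiplied by the density e^{2f}), showing that the functional E is
not conformally invariant. -/
theorem lightcone_functional_conformal_rescaling
    {X : Type*} [MeasurableSpace X]
    (μ : Measure X) [IsFiniteMeasure μ]
    (ρ : Measure X) [IsFiniteMeasure ρ] (hac : ρ ≪ μ)
    (Φ : X → ℝ≥0)
    (hΦ : ∀ x, ((Φ x : ℝ≥0∞)) ^ 2 = ρ.rnDeriv μ x)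
    (f : X → ℝ) (hf : Measurable f) :
    ρ ≪ μ.withDensity (fun x => ENNReal.ofReal (Real.exp (2 * f x))) ∧
    (∀ᵐ x ∂μ,
      Real.sqrt ((ρ.rnDeriv
          (μ.withDensity (fun x => ENNReal.ofReal (Real.exp (2 * f x)))) x).toReal) =
        Real.exp (-(f x)) * (Φ x : ℝ)) ∧
    ∫ x, (Real.sqrt ((ρ.rnDeriv
          (μ.withDensity (fun x => ENNReal.ofReal (Real.exp (2 * f x)))) x).toReal) - 1) ^ 2
        ∂(μ.withDensity (fun x => ENNReal.ofReal (Real.exp (2 * f x)))) =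
      ∫ x, ((Real.exp (-(f x)) * (Φ x : ℝ) - 1) ^ 2 * Real.exp (2 * f x)) ∂μ := by
  have hm : Measurable (fun x => ENNReal.ofReal (Real.exp (2 * f x))) := by fun_prop
  have h0 : ∀ᵐ x ∂μ, ENNReal.ofReal (Real.exp (2 * f x)) ≠ 0 :=
    ae_of_all _ fun x => (ENNReal.ofReal_pos.2 (Real.exp_pos _)).ne'
  have htop : ∀ᵐ x ∂μ, ENNReal.ofReal (Real.exp (2 * f x)) ≠ ∞ :=
    ae_of_all _ fun x => ENNReal.ofReal_ne_top
  have key : ∀ᵐ x ∂μ,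
      Real.sqrt ((ρ.rnDeriv
          (μ.withDensity (fun x => ENNReal.ofReal (Real.exp (2 * f x)))) x).toReal) =
        Real.exp (-(f x)) * (Φ x : ℝ) := by
    filter_upwards [Measure.rnDeriv_withDensity_right ρ μ hm.aemeasurable h0 htop] with x hx
    rw [hx, ← hΦ x, ENNReal.toReal_mul, ENNReal.toReal_inv,
      ENNReal.toReal_ofReal (Real.exp_pos _).le, ENNReal.toReal_pow, ENNReal.coe_toReal,
      ← Real.exp_neg]
    have h : Real.exp (-(2 * f x)) * (Φ x : ℝ) ^ 2 = (Real.exp (-(f x)) * (Φ x : ℝ)) ^ 2 := by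
      rw [mul_pow, ← Real.exp_nat_mul]
      congr 2
      push_cast
      ring
    rw [h, Real.sqrt_sq (by positivity)]
  refine ⟨hac.trans (withDensity_absolutelyContinuous' hm.aemeasurable h0), key, ?_⟩
  rw [integral_withDensity_eq_integral_toReal_smul hm
    (ae_of_all _ fun x => ENNReal.ofReal_lt_top)]
  refine integral_congr_ae ?_
  filter_upwards [key] with x hx
  rw [hx, ENNReal.toReal_ofReal (Real.exp_pos _).le, smul_eq_mul, mul_comm]
end
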